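/- arXiv:2201.07944 — 2 statements merged into one kernel-verified Lean document; each statement's English description precedes it below -/
import Mathlib

section
/- Let (V, ≤) be a finite partial order with a greatest element r (the root) such that for every v ∈ V the up-set {w : v ≤ w} is a chain (so (V, ≤) encodes a finite rooted tree), and let p : V → ℝ be a nonnegative weight function. Write W(u) = ∑_{v ≤ u} p(v) for the weight of the subtree rooted at u. Let r = u₀, u₁, …, u_k be any weighted heavy path from the root: u_{i+1} is a child of u_i (i.e., u_{i+1} ⋖ u_i) whose subtree weight W(u_{i+1}) is maximum among all children of u_i, and u_k has no children. Then min over 0 ≤ i ≤ k of |2·W(u_i) − W(r)| equals min over all v ∈ V of |2·W(v) − W(r)|; that is, some node on the weighted heavy path attains the minimum of |2·W(v) − W(r)| over all nodes, and hence is a middle point of the tree. -/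
open Finset Classical

open Classical in
theorem middle_point_on_weighted_heavy_path
    {V : Type*} [Fintype V] [PartialOrder V] [DecidableEq V]
    (r : V) (hroot : ∀ v : V, v ≤ r)
    (hchain : ∀ v : V, IsChain (· ≤ ·) {w : V | v ≤ w})
    (p : V → ℝ) (hp : ∀ v, 0 ≤ p v)
    (W : V → ℝ)
    (hW : ∀ u : V, W u = ∑ v ∈ Finset.univ.filter (fun v => v ≤ u), p v)
    (k : ℕ) (u : Fin (k + 1) → V)
    (h0 : u 0 = r)
    (hchild : ∀ i : Fin k, u i.succ ⋖ u i.castSucc)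
    (hheavy : ∀ i : Fin k, ∀ x : V, x ⋖ u i.castSucc → W x ≤ W (u i.succ))
    (hleaf : ∀ x : V, ¬ x ⋖ u (Fin.last k)) :
    ∃ i : Fin (k + 1), ∀ v : V, |2 * W (u i) - W r| ≤ |2 * W v - W r| := by
  have mono : ∀ a b : V, a ≤ b → W a ≤ W b := by
    intro a b hab
    rw [hW, hW]
    apply Finset.sum_le_sum_of_subset_of_nonneg
    · intro z hz
      simp only [Finset.mem_filter, Finset.mem_univ, true_and] at hz ⊢
      exact hz.trans hab
    · intro z _ _
      exact hp z
  have disj : ∀ x y : V, (∀ z, z ≤ x → ¬ z ≤ y) → W x + W y ≤ W r := by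
    intro x y h
    rw [hW x, hW y, hW r, ← Finset.sum_union]
    · apply Finset.sum_le_sum_of_subset_of_nonneg
      · intro z _
        simp [hroot z]
      · intro z _ _
        exact hp z
    · rw [Finset.disjoint_left]
      intro z hz hz'
      simp only [Finset.mem_filter, Finset.mem_univ, true_and] at hz hz'
      exact h z hz hz'
  have key : ∀ v : V, ∃ i : Fin (k + 1), |2 * W (u i) - W r| ≤ |2 * W v - W r| := by
    intro v
    by_contra! hcon
    have hne : ∀ i, v ≠ u i := by
      intro i hi
      have := hcon i
      rw [← hi] at this
      exact lt_irrefl _ this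
    have hle : ∀ i : Fin (k + 1), v ≤ u i := by
      intro i
      induction i using Fin.induction with
      | zero => rw [h0]; exact hroot v
      | succ i ih =>
        by_contra hv
        obtain ⟨x, hvx, hx⟩ := exists_le_covBy_of_lt (lt_of_le_of_ne ih (hne _))
        have h1 := mono _ _ hvx
        have h2 := hheavy i x hx
        have h3 : W x + W (u i.succ) ≤ W r := by
          apply disj
          intro z hzx hzu
          have hxu : x ≠ u i.succ := fun h => hv (h ▸ hvx)
          rcases hchain z hzx hzu hxu with h | h
          · exact hx.2 (lt_of_le_of_ne h hxu) (hchild i).1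
          · exact (hchild i).2 (lt_of_le_of_ne h hxu.symm) hx.1
        have h4 := hcon i.succ
        rw [abs_of_nonpos (by linarith : 2 * W v - W r ≤ 0)] at h4
        rcases lt_abs.1 h4 with h | h <;> linarith
    obtain ⟨x, _, hx⟩ := exists_le_covBy_of_lt (lt_of_le_of_ne (hle (Fin.last k)) (hne _))
    exact hleaf x hx
  obtain ⟨i, _, hi⟩ := Finset.exists_min_image (Finset.univ : Finset (Fin (k + 1)))
    (fun i => |2 * W (u i) - W r|) ⟨0, Finset.mem_univ _⟩
  refine ⟨i, fun v => ?_⟩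
  obtain ⟨j, hj⟩ := key v
  exact (hi j (Finset.mem_univ _)).trans hj
end

section
/- Let n ≥ 1 and ℓ : Fin n → ℕ satisfy the Kraft inequality ∑_{i} (1/2)^{ℓ(i)} ≤ 1. Then ∑_i ℓ(i) ≥ n · log₂ n (as real numbers). -/
theorem kraft_total_depth_lower_bound (n : ℕ) (hn : 1 ≤ n) (ℓ : Fin n → ℕ)
    (hkraft : ∑ i : Fin n, ((1 : ℝ) / 2) ^ (ℓ i) ≤ 1) :
    (n : ℝ) * Real.logb 2 n ≤ ∑ i : Fin n, (ℓ i : ℝ) := by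
  have hn0 : (0 : ℝ) < n := by exact_mod_cast hn
  have h2 : 0 < Real.log 2 := Real.log_pos (by norm_num)
  have key : ∀ i : Fin n, Real.log n - (ℓ i : ℝ) * Real.log 2
      ≤ (n : ℝ) * ((1 : ℝ) / 2) ^ (ℓ i) - 1 := by
    intro i
    have hp : (0 : ℝ) < ((1 : ℝ) / 2) ^ (ℓ i) := by positivity
    have h := Real.log_le_sub_one_of_pos (mul_pos hn0 hp)
    rw [Real.log_mul hn0.ne' hp.ne', Real.log_pow, one_div, Real.log_inv] at h
    rw [one_div]
    linarith
  have hs := Finset.sum_le_sum (fun i (_ : i ∈ Finset.univ) => key i)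
  rw [Finset.sum_sub_distrib, Finset.sum_sub_distrib, ← Finset.sum_mul, ← Finset.mul_sum] at hs
  simp only [Finset.sum_const, Finset.card_univ, Fintype.card_fin, nsmul_eq_mul, mul_one] at hs
  have hk := mul_le_mul_of_nonneg_left hkraft hn0.le
  rw [Real.logb, ← mul_div_assoc, div_le_iff₀ h2]
  linarith
end
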